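/- There is an absolute constant C such that the following holds. Let 0 < φ ≤ 1, and let G be a finite connected simple graph with n ≥ 2 vertices and m edges that is a φ-expander. Let A and B be disjoint sets of vertices of G with |A| ≤ |B|. Then there exist a matching M between A and B with |M| = |A| (every vertex of A is matched to a distinct vertex of B), together with a family (P_{ab})_{(a,b)∈M} of paths in G, where each P_{ab} joins a to b and has length at most C·(log₂ n)/φ, and every edge of G lies on at most C·(log₂ n)²/φ² of these paths. -/

import Mathlib

open Finset
open scoped Classical

noncomputable section

universe u

variable {V : Type*} [Fintype V]

/-- The degree of the vertex `v` in the graph `G`. -/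
def gdeg (G : SimpleGraph V) (v : V) : ℕ :=
  (Finset.univ.filter fun u => G.Adj v u).card

/-- The volume of a vertex set `S` in `G`: the sum of degrees of its vertices. -/
def gvol (G : SimpleGraph V) (S : Finset V) : ℕ := ∑ v ∈ S, gdeg G v

/-- The number of edges of `G` with exactly one endpoint in `S`. -/
def gcut (G : SimpleGraph V) (S : Finset V) : ℕ :=
  (Finset.univ.filter fun p : V × V => p.1 ∈ S ∧ p.2 ∉ S ∧ G.Adj p.1 p.2).card

/-- `G` is a `φ`-expander: for every set `S` with `∅ ≠ S ⊊ V(G)`,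
`δ_G(S) ≥ φ · min(vol_G(S), vol_G(V \ S))`. -/
def IsExpander (G : SimpleGraph V) (φ : ℝ) : Prop :=
  ∀ S : Finset V, S.Nonempty → (Finset.univ \ S).Nonempty →
    φ * min (gvol G S : ℝ) (gvol G (Finset.univ \ S) : ℝ) ≤ (gcut G S : ℝ)

/-- A partial routing: a matching `M` between `A` and `B`, each pair joined by a path of length
at most `L` with edge set `E p`. -/
structure Rt (G : SimpleGraph V) (L : ℕ) (A B : Finset V) (M : Finset (V × V))
    (E : V × V → Finset (Sym2 V)) : Prop where
  mem : ∀ p ∈ M, p.1 ∈ A ∧ p.2 ∈ B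
  inj : ∀ p ∈ M, ∀ q ∈ M, p ≠ q → p.1 ≠ q.1 ∧ p.2 ≠ q.2
  path : ∀ p ∈ M, ∃ w : G.Walk p.1 p.2, w.IsPath ∧ w.length ≤ L ∧ w.edges.toFinset = E p

/-- The number of paths through `e`. -/
def eload (M : Finset (V × V)) (E : V × V → Finset (Sym2 V)) (e : Sym2 V) : ℕ :=
  (M.filter fun p => e ∈ E p).card

lemma Rt.union {G : SimpleGraph V} {L : ℕ} {A₁ B₁ A₂ B₂ : Finset V} {M₁ M₂ : Finset (V × V)}
    {E₁ E₂ : V × V → Finset (Sym2 V)} (h₁ : Rt G L A₁ B₁ M₁ E₁) (h₂ : Rt G L A₂ B₂ M₂ E₂)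
    (hA : Disjoint A₁ A₂) (hB : Disjoint B₁ B₂) :
    ∃ M E, Rt G L (A₁ ∪ A₂) (B₁ ∪ B₂) M E ∧ M.card = M₁.card + M₂.card ∧
      ∀ e, eload M E e = eload M₁ E₁ e + eload M₂ E₂ e := by
  have hM : ∀ p ∈ M₁, p ∉ M₂ := fun p hp hp2 =>
    Finset.disjoint_left.1 hA (h₁.mem p hp).1 (h₂.mem p hp2).1
  have hd : Disjoint M₁ M₂ := Finset.disjoint_left.2 hM
  refine ⟨M₁ ∪ M₂, fun p => if p ∈ M₁ then E₁ p else E₂ p, ⟨?_, ?_, ?_⟩, ?_, ?_⟩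
  · intro p hp
    rcases Finset.mem_union.1 hp with hp | hp
    · exact ⟨Finset.mem_union_left _ (h₁.mem p hp).1, Finset.mem_union_left _ (h₁.mem p hp).2⟩
    · exact ⟨Finset.mem_union_right _ (h₂.mem p hp).1, Finset.mem_union_right _ (h₂.mem p hp).2⟩
  · intro p hp q hq hne
    rcases Finset.mem_union.1 hp with hp | hp <;> rcases Finset.mem_union.1 hq with hq | hq
    · exact h₁.inj p hp q hq hne
    · exact ⟨fun h => Finset.disjoint_left.1 hA (h₁.mem p hp).1 (h ▸ (h₂.mem q hq).1),
        fun h => Finset.disjoint_left.1 hB (h₁.mem p hp).2 (h ▸ (h₂.mem q hq).2)⟩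
    · exact ⟨fun h => Finset.disjoint_left.1 hA (h₁.mem q hq).1 (h ▸ (h₂.mem p hp).1),
        fun h => Finset.disjoint_left.1 hB (h₁.mem q hq).2 (h ▸ (h₂.mem p hp).2)⟩
    · exact h₂.inj p hp q hq hne
  · intro p hp
    by_cases h : p ∈ M₁
    · simpa only [h, if_true] using h₁.path p h
    · have h2 : p ∈ M₂ := (Finset.mem_union.1 hp).resolve_left h
      simpa only [h, if_false] using h₂.path p h2
  · exact Finset.card_union_of_disjoint hd
  · intro e
    unfold eload
    rw [Finset.filter_union, Finset.card_union_of_disjoint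
      (Finset.disjoint_filter_filter hd)]
    congr 1
    · congr 1
      apply Finset.filter_congr
      intro p hp; simp [hp]
    · congr 1
      apply Finset.filter_congr
      intro p hp
      have : p ∉ M₁ := fun h => hM p h hp
      simp [this]

lemma Rt.mono {G : SimpleGraph V} {L : ℕ} {A B A' B' : Finset V} {M : Finset (V × V)}
    {E : V × V → Finset (Sym2 V)} (h : Rt G L A B M E) (hA : A ⊆ A') (hB : B ⊆ B') :
    Rt G L A' B' M E :=
  ⟨fun p hp => ⟨hA (h.mem p hp).1, hB (h.mem p hp).2⟩, h.inj, h.path⟩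

lemma Rt.shrink {G : SimpleGraph V} {L : ℕ} {A B : Finset V} {M : Finset (V × V)}
    {E : V × V → Finset (Sym2 V)} (h : Rt G L A B M E) :
    Rt G L (M.image Prod.fst) (M.image Prod.snd) M E :=
  ⟨fun _ hp => ⟨Finset.mem_image_of_mem _ hp, Finset.mem_image_of_mem _ hp⟩, h.inj, h.path⟩

lemma Rt.card_fst {G : SimpleGraph V} {L : ℕ} {A B : Finset V} {M : Finset (V × V)}
    {E : V × V → Finset (Sym2 V)} (h : Rt G L A B M E) :
    (M.image Prod.fst).card = M.card ∧ M.image Prod.fst ⊆ A ∧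
    (M.image Prod.snd).card = M.card ∧ M.image Prod.snd ⊆ B := by
  refine ⟨Finset.card_image_of_injOn ?_, ?_, Finset.card_image_of_injOn ?_, ?_⟩
  · intro p hp q hq hpq
    by_contra hne
    exact (h.inj p hp q hq hne).1 hpq
  · exact Finset.image_subset_iff.2 fun p hp => (h.mem p hp).1
  · intro p hp q hq hpq
    by_contra hne
    exact (h.inj p hp q hq hne).2 hpq
  · exact Finset.image_subset_iff.2 fun p hp => (h.mem p hp).2

lemma Rt.sum_load {G : SimpleGraph V} {L : ℕ} {A B : Finset V} {M : Finset (V × V)}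
    {E : V × V → Finset (Sym2 V)} (h : Rt G L A B M E) :
    ∑ e : Sym2 V, eload M E e ≤ M.card * L := by
  have : ∑ e : Sym2 V, eload M E e = ∑ p ∈ M, (E p).card := by
    simp only [eload, Finset.card_filter]
    rw [Finset.sum_comm]
    refine Finset.sum_congr rfl fun p _ => ?_
    simp
  rw [this]
  refine Finset.sum_le_card_nsmul _ _ _ fun p hp => ?_
  obtain ⟨w, _, hl, he⟩ := h.path p hp
  rw [← he]
  exact (List.toFinset_card_le _).trans (by simpa using hl)

/-- One step of neighbourhood growth. -/
def nbr (H : SimpleGraph V) (S : Finset V) : Finset V :=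
  S ∪ Finset.univ.filter fun v => ∃ u ∈ S, H.Adj u v

lemma nbr_walk (H : SimpleGraph V) (S : Finset V) (i : ℕ) :
    ∀ v ∈ (nbr H)^[i] S, ∃ a ∈ S, ∃ w : H.Walk a v, w.length ≤ i := by
  induction i with
  | zero => intro v hv; exact ⟨v, hv, SimpleGraph.Walk.nil, by simp⟩
  | succ i ih =>
    intro v hv
    rw [Function.iterate_succ_apply'] at hv
    rcases Finset.mem_union.1 hv with hv | hv
    · obtain ⟨a, ha, w, hw⟩ := ih v hv
      exact ⟨a, ha, w, by omega⟩
    · obtain ⟨u, hu, huv⟩ := (Finset.mem_filter.1 hv).2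
      obtain ⟨a, ha, w, hw⟩ := ih u hu
      exact ⟨a, ha, w.concat huv, by simp; omega⟩

lemma gvol_mono (G : SimpleGraph V) {S T : Finset V} (h : S ⊆ T) : gvol G S ≤ gvol G T :=
  Finset.sum_le_sum_of_subset h

lemma gvol_nbr (G H : SimpleGraph V) (hH : H ≤ G) (S : Finset V) :
    gvol G S + gcut H S ≤ gvol G (nbr H S) := by
  have h1 : S ⊆ nbr H S := Finset.subset_union_left
  have h2 : gvol G (nbr H S) = gvol G S + gvol G (nbr H S \ S) := by
    unfold gvol
    rw [add_comm, Finset.sum_sdiff h1]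
  rw [h2]
  gcongr
  unfold gcut gvol
  have : ∀ p ∈ (Finset.univ.filter fun p : V × V => p.1 ∈ S ∧ p.2 ∉ S ∧ H.Adj p.1 p.2),
      p.2 ∈ nbr H S \ S := by
    rintro ⟨u, v⟩ hp
    simp only [Finset.mem_filter, Finset.mem_univ, true_and] at hp
    simp only [nbr, Finset.mem_sdiff, Finset.mem_union, Finset.mem_filter, Finset.mem_univ,
      true_and]
    exact ⟨Or.inr ⟨u, hp.1, hp.2.2⟩, hp.2.1⟩
  rw [Finset.card_eq_sum_card_fiberwise this]
  refine Finset.sum_le_sum fun v _ => ?_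
  unfold gdeg
  refine Finset.card_le_card_of_injOn Prod.fst ?_ ?_
  · rintro ⟨u, w⟩ hp
    simp only [Finset.coe_filter, Finset.mem_filter, Finset.mem_univ, true_and,
      Set.mem_setOf_eq] at hp ⊢
    obtain ⟨⟨_, _, h⟩, rfl⟩ := hp
    exact (hH h).symm
  · rintro ⟨u, w⟩ hp ⟨u', w'⟩ hp' h
    simp only [Finset.coe_filter, Finset.mem_filter, Finset.mem_univ, true_and,
      Set.mem_setOf_eq] at hp hp'
    rw [Prod.mk.injEq]
    exact ⟨h, hp.2.trans hp'.2.symm⟩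

lemma gcut_delete (G : SimpleGraph V) (F : Finset (Sym2 V)) (S : Finset V) :
    gcut G S ≤ gcut (G.deleteEdges F) S + F.card := by
  unfold gcut
  set X := (Finset.univ.filter fun p : V × V => p.1 ∈ S ∧ p.2 ∉ S ∧ G.Adj p.1 p.2)
  rw [← Finset.card_filter_add_card_filter_not (s := X) (fun p => s(p.1, p.2) ∉ F)]
  refine add_le_add (Finset.card_le_card ?_) (Finset.card_le_card_of_injOn (fun p => s(p.1, p.2)) ?_ ?_)
  · intro p hp
    simp only [X, Finset.mem_filter, Finset.mem_univ, true_and] at hp ⊢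
    refine ⟨hp.1.1, hp.1.2.1, ?_⟩
    rw [SimpleGraph.deleteEdges_adj]
    exact ⟨hp.1.2.2, by simpa using hp.2⟩
  · intro p hp
    simpa using (Finset.mem_filter.1 hp).2
  · rintro ⟨u, v⟩ hp ⟨u', v'⟩ hp' h
    simp only [X, Finset.coe_filter, Finset.mem_filter, Finset.mem_univ, true_and,
      Set.mem_setOf_eq] at hp hp'
    simp only [Sym2.eq_iff] at h
    rcases h with h | h
    · rw [Prod.mk.injEq]; exact h
    · exact absurd hp'.1.1 (h.2 ▸ hp.1.2.1)

lemma gdeg_pos (G : SimpleGraph V) (hc : G.Connected) (hn : 2 ≤ Fintype.card V) (v : V) :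
    1 ≤ gdeg G v := by
  haveI : Nontrivial V := Fintype.one_lt_card_iff_nontrivial.1 hn
  obtain ⟨u, hu⟩ := hc.preconnected.exists_adj_of_nontrivial v
  exact Finset.card_pos.2 ⟨u, by simpa using hu⟩

lemma card_le_gvol (G : SimpleGraph V) (hc : G.Connected) (hn : 2 ≤ Fintype.card V)
    (S : Finset V) : S.card ≤ gvol G S := by
  unfold gvol
  simpa using Finset.card_nsmul_le_sum S (gdeg G) 1 fun v _ => gdeg_pos G hc hn v

lemma gvol_le (G : SimpleGraph V) (S : Finset V) : gvol G S ≤ Fintype.card V ^ 2 := by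
  refine (gvol_mono G (Finset.subset_univ S)).trans ?_
  unfold gvol
  refine (Finset.sum_le_card_nsmul _ _ (Fintype.card V) fun v _ => Finset.card_le_univ _).trans ?_
  simp [sq]

lemma growth (G : SimpleGraph V) (φ : ℝ) (h0 : 0 < φ) (hc : G.Connected)
    (hn : 2 ≤ Fintype.card V) (hE : IsExpander G φ) (F : Finset (Sym2 V)) (S : Finset V)
    (hS : S.Nonempty) (hF : 2 * (F.card : ℝ) ≤ φ * S.card) (s t : ℕ) (hs : 2 ≤ s * φ)
    (ht : Fintype.card V < 2 ^ t) :
    gvol G Finset.univ < 2 * gvol G ((nbr (G.deleteEdges F))^[2 * s * t] S) := by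
  set H := G.deleteEdges (F : Set (Sym2 V)) with hHdef
  by_contra hcon
  push Not at hcon
  have hmono : Monotone fun i => (nbr H)^[i] S := by
    refine monotone_nat_of_le_succ fun i => ?_
    rw [Function.iterate_succ_apply']
    exact Finset.subset_union_left
  have hsmall : ∀ i ≤ 2 * s * t, 2 * gvol G ((nbr H)^[i] S) ≤ gvol G Finset.univ := fun i hi =>
    le_trans (Nat.mul_le_mul_left 2 (gvol_mono G (hmono hi))) hcon
  have key : ∀ i ≤ 2 * s * t, (1 + φ / 2) ^ i ≤ (gvol G ((nbr H)^[i] S) : ℝ) := by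
    intro i
    induction i with
    | zero =>
      intro _
      have := card_le_gvol G hc hn S
      have h1 := hS.card_pos
      simp only [pow_zero, Function.iterate_zero, id]
      exact_mod_cast h1.trans_le this
    | succ i ih =>
      intro hi
      have ih := ih (by omega)
      have hsm := hsmall i (by omega)
      rw [Function.iterate_succ_apply']
      set T := (nbr H)^[i] S with hT
      have hST : S ⊆ T := hmono (Nat.zero_le i)
      have hvT : S.card ≤ gvol G T := (Finset.card_le_card hST).trans (card_le_gvol G hc hn T)
      have hcard := hS.card_pos
      have hvol : gvol G (Finset.univ \ T) + gvol G T = gvol G Finset.univ :=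
        Finset.sum_sdiff (Finset.subset_univ T)
      have hne : (Finset.univ \ T).Nonempty := by
        by_contra h
        rw [Finset.not_nonempty_iff_eq_empty] at h
        rw [h] at hvol
        simp only [gvol, Finset.sum_empty] at hvol
        simp only [gvol] at hsm hvT
        omega
      have hexp := hE T (hS.mono hST) hne
      have hle : (gvol G T : ℝ) ≤ gvol G (Finset.univ \ T) := by
        exact_mod_cast (by omega : gvol G T ≤ gvol G (Finset.univ \ T))
      rw [min_eq_left hle] at hexp
      have hcut : (gcut G T : ℝ) ≤ gcut H T + F.card := by exact_mod_cast gcut_delete G F T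
      have hnb : (gvol G T : ℝ) + gcut H T ≤ gvol G (nbr H T) := by
        exact_mod_cast gvol_nbr G H (SimpleGraph.deleteEdges_le _) T
      have hvT' : (S.card : ℝ) ≤ gvol G T := by exact_mod_cast hvT
      have h3 : φ * S.card ≤ φ * gvol G T := by gcongr
      calc (1 + φ / 2) ^ (i + 1) = (1 + φ / 2) ^ i * (1 + φ / 2) := pow_succ _ _
        _ ≤ gvol G T * (1 + φ / 2) := by gcongr
        _ ≤ gvol G (nbr H T) := by nlinarith
  have hk := key _ le_rfl
  have hb : (2 : ℝ) ≤ (1 + φ / 2) ^ s := by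
    have := one_add_mul_le_pow (a := φ / 2) (by linarith) s
    nlinarith
  have h4 : ((2 : ℝ) ^ t) ^ 2 ≤ (1 + φ / 2) ^ (2 * s * t) := by
    have : (1 + φ / 2) ^ (2 * s * t) = (((1 + φ / 2) ^ s) ^ t) ^ 2 := by
      rw [← pow_mul, ← pow_mul]; ring_nf
    rw [this]; gcongr
  have h5 : (gvol G ((nbr H)^[2 * s * t] S) : ℝ) ≤ (Fintype.card V : ℝ) ^ 2 := by
    exact_mod_cast gvol_le G _
  have h6 : (Fintype.card V : ℝ) ^ 2 < ((2 : ℝ) ^ t) ^ 2 := by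
    have : (Fintype.card V : ℝ) < 2 ^ t := by exact_mod_cast ht
    gcongr
  linarith

lemma short_path (G : SimpleGraph V) (φ : ℝ) (h0 : 0 < φ) (hc : G.Connected)
    (hn : 2 ≤ Fintype.card V) (hE : IsExpander G φ) (F : Finset (Sym2 V)) (S T : Finset V)
    (hS : S.Nonempty) (hF : 2 * (F.card : ℝ) ≤ φ * S.card) (hST : S.card ≤ T.card)
    (s t : ℕ) (hs : 2 ≤ s * φ) (ht : Fintype.card V < 2 ^ t) :
    ∃ a ∈ S, ∃ b ∈ T, ∃ w : G.Walk a b, w.IsPath ∧ w.length ≤ 4 * s * t ∧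
      ∀ e ∈ w.edges, e ∉ F := by
  have hT : T.Nonempty := Finset.card_pos.1 (hS.card_pos.trans_le hST)
  have hF' : 2 * (F.card : ℝ) ≤ φ * T.card := hF.trans (by gcongr)
  have g1 := growth G φ h0 hc hn hE F S hS hF s t hs ht
  have g2 := growth G φ h0 hc hn hE F T hT hF' s t hs ht
  set X := (nbr (G.deleteEdges F))^[2 * s * t] S with hX
  set Y := (nbr (G.deleteEdges F))^[2 * s * t] T with hY
  have : ¬ Disjoint X Y := by
    intro hd
    have h1 : gvol G (X ∪ Y) = gvol G X + gvol G Y := Finset.sum_union hd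
    have h2 := gvol_mono G (Finset.subset_univ (X ∪ Y))
    omega
  obtain ⟨v, hvX, hvY⟩ := Finset.not_disjoint_iff.1 this
  obtain ⟨a, ha, w1, hw1⟩ := nbr_walk _ _ _ v hvX
  obtain ⟨b, hb, w2, hw2⟩ := nbr_walk _ _ _ v hvY
  let w := (w1.append w2.reverse).bypass
  refine ⟨a, ha, b, hb, w.mapLe (SimpleGraph.deleteEdges_le _), ?_, ?_, ?_⟩
  · exact (SimpleGraph.Walk.mapLe_isPath _).2 (SimpleGraph.Walk.bypass_isPath _)
  · have := (w1.append w2.reverse).length_bypass_le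
    simp only [SimpleGraph.Walk.length_append, SimpleGraph.Walk.length_reverse] at this
    simp only [SimpleGraph.Walk.mapLe, SimpleGraph.Walk.length_map, w]
    have h4 : 4 * s * t = 2 * s * t + 2 * s * t := by ring
    omega
  · intro e he
    rw [SimpleGraph.Walk.edges_mapLe_eq_edges] at he
    have := w.edges_subset_edgeSet he
    rw [SimpleGraph.edgeSet_deleteEdges] at this
    exact fun h => this.2 (by simpa using h)

lemma round_lemma (G : SimpleGraph V) (φ : ℝ) (h0 : 0 < φ) (hc : G.Connected)
    (hn : 2 ≤ Fintype.card V) (hE : IsExpander G φ) (s t : ℕ) (hs : 2 ≤ s * φ)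
    (ht : Fintype.card V < 2 ^ t) (A B : Finset V) (hAB : A.card ≤ B.card) (j : ℕ)
    (hj : 2 * j ≤ A.card + 1) :
    ∃ M E, Rt G (4 * s * t) A B M E ∧ M.card = j ∧ ∀ e, eload M E e ≤ s * (4 * s * t) := by
  have hs0 : 0 < s := by
    rcases Nat.eq_zero_or_pos s with h | h
    · subst h; norm_num at hs
    · exact h
  have ht0 : 0 < t := by
    rcases Nat.eq_zero_or_pos t with h | h
    · subst h; omega
    · exact h
  have hL : 0 < 4 * s * t := by positivity
  generalize hLe : 4 * s * t = L at *
  induction j with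
  | zero =>
    exact ⟨∅, fun _ => ∅, ⟨by simp, by simp, by simp⟩, by simp, by simp [eload]⟩
  | succ j ih =>
    obtain ⟨M, E, hR, hM, hl⟩ := ih (by omega)
    obtain ⟨c1, s1, c2, s2⟩ := hR.card_fst
    set S := A \ M.image Prod.fst with hS
    set T := B \ M.image Prod.snd with hT
    have hSc : S.card = A.card - j := by rw [hS, Finset.card_sdiff_of_subset s1, c1, hM]
    have hTc : T.card = B.card - j := by rw [hT, Finset.card_sdiff_of_subset s2, c2, hM]
    set F := Finset.univ.filter fun e : Sym2 V => s * L ≤ eload M E e with hFd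
    have hFs : F.card * (s * L) ≤ j * L := by
      calc F.card * (s * L) ≤ ∑ e ∈ F, eload M E e := by
            simpa using Finset.card_nsmul_le_sum F (eload M E) (s * L)
              fun e he => (Finset.mem_filter.1 he).2
        _ ≤ ∑ e, eload M E e := Finset.sum_le_sum_of_subset (Finset.subset_univ _)
        _ ≤ j * L := hM ▸ hR.sum_load
    have hFs2 : F.card * s ≤ S.card := by
      have : F.card * s ≤ j := by
        rw [← mul_assoc] at hFs
        exact Nat.le_of_mul_le_mul_right hFs hL
      omega
    have hF : 2 * (F.card : ℝ) ≤ φ * S.card := by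
      have h1 : (F.card : ℝ) * s ≤ S.card := by exact_mod_cast hFs2
      have h2 : (0 : ℝ) ≤ F.card := by positivity
      nlinarith [mul_le_mul_of_nonneg_left h1 h0.le, mul_le_mul_of_nonneg_left hs h2]
    obtain ⟨a, ha, b, hb, w, hw, hwl, hwF⟩ := short_path G φ h0 hc hn hE F S T
      (Finset.card_pos.1 (by omega)) hF (by omega) s t hs ht
    have hR2 : Rt G L S T {(a, b)} (fun _ => w.edges.toFinset) := by
      refine ⟨by simp [ha, hb], by simp, ?_⟩
      intro p hp
      rw [Finset.mem_singleton] at hp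
      subst hp
      exact ⟨w, hw, hLe ▸ hwl, rfl⟩
    obtain ⟨M', E', hR', hc', hl'⟩ := hR.shrink.union hR2 Finset.disjoint_sdiff
      Finset.disjoint_sdiff
    refine ⟨M', E', hR'.mono (Finset.union_subset s1 Finset.sdiff_subset)
      (Finset.union_subset s2 Finset.sdiff_subset), by simp [hc', hM], fun e => ?_⟩
    rw [hl' e]
    have h1 : eload {(a, b)} (fun _ => w.edges.toFinset) e ≤ 1 := by
      unfold eload
      exact (Finset.card_filter_le _ _).trans (by simp)
    by_cases he : e ∈ F
    · have : e ∉ w.edges := fun h => hwF e h he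
      have h2 : eload {(a, b)} (fun _ => w.edges.toFinset) e = 0 := by
        simp [eload, this]
      rw [h2]
      exact hl e
    · have : eload M E e < s * L := by simpa [hFd] using he
      omega

lemma all_lemma (G : SimpleGraph V) (φ : ℝ) (h0 : 0 < φ) (hc : G.Connected)
    (hn : 2 ≤ Fintype.card V) (hE : IsExpander G φ) (s t : ℕ) (hs : 2 ≤ s * φ)
    (ht : Fintype.card V < 2 ^ t) (r : ℕ) : ∀ (A B : Finset V), A.card ≤ B.card →
    A.card < 2 ^ r →
    ∃ M E, Rt G (4 * s * t) A B M E ∧ M.card = A.card ∧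
      ∀ e, eload M E e ≤ r * (s * (4 * s * t)) := by
  induction r with
  | zero =>
    intro A B _ hA
    have : A.card = 0 := by simpa using hA
    exact ⟨∅, fun _ => ∅, ⟨by simp, by simp, by simp⟩, by simp [this], by simp [eload]⟩
  | succ r ih =>
    intro A B hAB hA
    obtain ⟨M, E, hR, hM, hl⟩ := round_lemma G φ h0 hc hn hE s t hs ht A B hAB
      ((A.card + 1) / 2) (by omega)
    obtain ⟨c1, s1, c2, s2⟩ := hR.card_fst
    have hSc := Finset.card_sdiff_of_subset s1
    have hTc := Finset.card_sdiff_of_subset s2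
    obtain ⟨M2, E2, hR2, hM2, hl2⟩ := ih (A \ M.image Prod.fst) (B \ M.image Prod.snd)
      (by omega) (by rw [pow_succ] at hA; omega)
    obtain ⟨M', E', hR', hc', hl'⟩ := hR.shrink.union hR2 Finset.disjoint_sdiff
      Finset.disjoint_sdiff
    refine ⟨M', E', hR'.mono (Finset.union_subset s1 Finset.sdiff_subset)
      (Finset.union_subset s2 Finset.sdiff_subset), by omega, fun e => ?_⟩
    rw [hl' e, add_mul, one_mul]
    have := hl e
    have := hl2 e
    omega

/-- There is an absolute constant `C` such that in any connected `φ`-expander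
(`0 < φ ≤ 1`) on `n ≥ 2` vertices, for any disjoint vertex sets `A`, `B` with
`|A| ≤ |B|`, there is a matching `M` of all of `A` into `B`, together with an
embedding of `M` by paths of length at most `C·log₂ n / φ` such that every edge
lies on at most `C·(log₂ n)² / φ²` of the paths. -/
theorem statement13 :
    ∃ C : ℝ, 0 < C ∧
      ∀ (V : Type u) [Fintype V] (G : SimpleGraph V) (φ : ℝ),
        0 < φ → φ ≤ 1 → G.Connected → 2 ≤ Fintype.card V → IsExpander G φ →
        ∀ A B : Finset V, Disjoint A B → A.card ≤ B.card →
          ∃ M : Finset (V × V),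
            (∀ p ∈ M, p.1 ∈ A ∧ p.2 ∈ B) ∧
            (∀ p ∈ M, ∀ q ∈ M, p ≠ q → p.1 ≠ q.1 ∧ p.2 ≠ q.2) ∧
            M.card = A.card ∧
            ∃ P : ∀ p : {x : V × V // x ∈ M}, G.Walk p.1.1 p.1.2,
              (∀ p, (P p).IsPath ∧
                ((P p).length : ℝ) ≤ C * Real.logb 2 (Fintype.card V) / φ) ∧
              (∀ e : Sym2 V,
                ({p : {x : V × V // x ∈ M} | e ∈ (P p).edges}.ncard : ℝ) ≤
                  C * (Real.logb 2 (Fintype.card V)) ^ 2 / φ ^ 2) := by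
  refine ⟨144, by norm_num, ?_⟩
  intro V _ G φ h0 h1 hc hn hE A B _ hAB
  obtain ⟨s, hs⟩ : ∃ s : ℕ, s = ⌈2 / φ⌉₊ := ⟨_, rfl⟩
  obtain ⟨t, ht⟩ : ∃ t : ℕ, t = Nat.log 2 (Fintype.card V) + 1 := ⟨_, rfl⟩
  have hs2 : 2 ≤ s * φ := by
    have := Nat.le_ceil (2 / φ)
    rw [← hs, div_le_iff₀ h0] at this
    exact this
  have hs3 : (s : ℝ) ≤ 3 / φ := by
    have := Nat.ceil_lt_add_one (a := 2 / φ) (by positivity)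
    rw [← hs] at this
    have h2 : 1 ≤ 1 / φ := by rw [le_div_iff₀ h0]; linarith
    have h3 : 3 / φ = 2 / φ + 1 / φ := by ring
    linarith
  have ht1 : Fintype.card V < 2 ^ t := ht ▸ Nat.lt_pow_succ_log_self (by norm_num) _
  set lg := Real.logb 2 (Fintype.card V) with hlg
  have hlg1 : 1 ≤ lg := by
    rw [hlg, Real.le_logb_iff_rpow_le (by norm_num) (by positivity)]
    simpa using (by exact_mod_cast hn : (2 : ℝ) ≤ Fintype.card V)
  have ht2 : (t : ℝ) ≤ 2 * lg := by
    have h2 : ((Nat.log 2 (Fintype.card V) : ℕ) : ℝ) ≤ lg := by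
      have := Real.natLog_le_logb (Fintype.card V) 2
      simpa using this
    rw [ht]; push_cast; linarith
  obtain ⟨M, E, hR, hM, hl⟩ := all_lemma G φ h0 hc hn hE s t hs2 ht1 t A B hAB
    ((Finset.card_le_univ A).trans_lt ht1)
  have hst : (s : ℝ) * t ≤ 6 * lg / φ := by
    calc (s : ℝ) * t ≤ 3 / φ * (2 * lg) := by gcongr
      _ = 6 * lg / φ := by ring
  choose P hP using fun p : {x : V × V // x ∈ M} => hR.path p.1 p.2
  refine ⟨M, hR.mem, hR.inj, hM, P, fun p => ⟨(hP p).1, ?_⟩, fun e => ?_⟩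
  · have h2 : ((P p).length : ℝ) ≤ 4 * s * t := by exact_mod_cast (hP p).2.1
    calc ((P p).length : ℝ) ≤ 4 * (s * t) := by linarith
      _ ≤ 4 * (6 * lg / φ) := by gcongr
      _ = 24 * (lg / φ) := by ring
      _ ≤ 144 * (lg / φ) := by gcongr; norm_num
      _ = 144 * lg / φ := by ring
  · have h2 : {p : {x : V × V // x ∈ M} | e ∈ (P p).edges}.ncard ≤ eload M E e := by
      unfold eload
      rw [← Set.ncard_coe_finset]
      refine Set.ncard_le_ncard_of_injOn Subtype.val ?_ Subtype.val_injective.injOn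
        (Finset.finite_toSet _)
      intro p hp
      have hp' : e ∈ (P p).edges := hp
      rw [Finset.mem_coe, Finset.mem_filter]
      refine ⟨p.2, ?_⟩
      rw [← (hP p).2.2]
      simpa using hp'
    have h3 : ({p : {x : V × V // x ∈ M} | e ∈ (P p).edges}.ncard : ℝ) ≤
        t * (s * (4 * s * t)) := by exact_mod_cast h2.trans (hl e)
    calc _ ≤ (t : ℝ) * (s * (4 * s * t)) := h3
      _ = 4 * (s * t) ^ 2 := by ring
      _ ≤ 4 * (6 * lg / φ) ^ 2 := by gcongr
      _ = 144 * lg ^ 2 / φ ^ 2 := by ring
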